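/- arXiv:2602.05790 — 2 statements merged into one kernel-verified Lean document; each statement's English description precedes it below -/
import Mathlib

section
/- Fix constants R*, η > 0 and α ∈ (0, 1/4). Let (W, Σ) be admissible with parameter α (Σ = UΛUᵀ, λ the diagonal of Λ), let τ = τ(W, Σ), and set p_n = Pr_{c ~ N(0,Iₙ)}[ (1/n) d_Σ(W, τ c) ≤ 𝐃_rc^λ(UᵀW, R*) + η ]. Then there is a constant c = c(η, R*, α) such that for all sufficiently large n: ln p_n ≥ −n R* ln 2 · (1 + c n^{4α−1}). -/
open MeasureTheory Matrix Real

/-- Standard Gaussian measure `N(0, I_n)` on `ℝⁿ`. -/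
noncomputable def stdGaussian (n : ℕ) : Measure (Fin n → ℝ) :=
  Measure.pi fun _ => ProbabilityTheory.gaussianReal 0 1

/-- Distortion `d_Σ(w, v) = (w - v)ᵀ Σ (w - v)`. -/
noncomputable def dSig {n : ℕ} (Sig : Matrix (Fin n) (Fin n) ℝ) (w v : Fin n → ℝ) : ℝ :=
  (w - v) ⬝ᵥ Sig.mulVec (w - v)

/-- Random-coding rate `R_rc(λ, T) = (1/(2n)) Σᵢ log₂(1 + λᵢ T)`. -/
noncomputable def Rrc {n : ℕ} (lam : Fin n → ℝ) (T : ℝ) : ℝ :=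
  (1 / (2 * (n : ℝ))) * ∑ i, Real.logb 2 (1 + lam i * T)

/-- `T_rc(λ, R)`: the unique `T > 0` with `R_rc(λ, T) = R`. -/
noncomputable def Trc {n : ℕ} (lam : Fin n → ℝ) (R : ℝ) : ℝ :=
  Classical.epsilon fun T => 0 < T ∧ Rrc lam T = R

/-- General random-coding distortion `D_rc^λ(V, T) = (1/n) Σᵢ Vᵢ² λᵢ/(1 + λᵢ T)`. -/
noncomputable def DrcV {n : ℕ} (lam V : Fin n → ℝ) (T : ℝ) : ℝ :=
  (1 / (n : ℝ)) * ∑ i, (V i) ^ 2 * lam i / (1 + lam i * T)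

/-- `𝐃_rc^λ(V, R) = D_rc^λ(V, T_rc(λ, R))`. -/
noncomputable def DDrcV {n : ℕ} (lam V : Fin n → ℝ) (R : ℝ) : ℝ :=
  DrcV lam V (Trc lam R)

/-- Scaling parameter `τ`, as a function of `λ`, `W̃ = UᵀW` and `T`. -/
noncomputable def tauDef {n : ℕ} (lam Wt : Fin n → ℝ) (T : ℝ) : ℝ :=
  Real.sqrt (T * ∑ j, (Wt j) ^ 2 * (lam j) ^ 2 / (1 + lam j * T) ^ 2) /
    Real.sqrt (∑ j, lam j / (1 + lam j * T))

/-- Rotation invariance of the standard Gaussian. -/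
lemma aux_rot {n : ℕ} (M : Matrix (Fin n) (Fin n) ℝ) (hM : Mᵀ * M = 1) :
    (stdGaussian n).map (fun x => M.mulVec x) = stdGaussian n := by
  let li : EuclideanSpace ℝ (Fin n) →ₗᵢ[ℝ] EuclideanSpace ℝ (Fin n) :=
    { toLinearMap := Matrix.toEuclideanLin M
      norm_map' := by
        intro x
        have h : ‖Matrix.toEuclideanLin M x‖ ^ 2 = ‖x‖ ^ 2 := by
          rw [EuclideanSpace.real_norm_sq_eq, EuclideanSpace.real_norm_sq_eq]
          have h1 : (M.mulVec x.ofLp) ⬝ᵥ (M.mulVec x.ofLp) = x.ofLp ⬝ᵥ x.ofLp := by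
            rw [Matrix.dotProduct_mulVec, Matrix.vecMul_mulVec, hM, Matrix.vecMul_one]
          simp only [dotProduct, ← sq] at h1
          exact h1
        exact (sq_eq_sq₀ (norm_nonneg _) (norm_nonneg _)).mp h }
  let f := li.toLinearIsometryEquiv rfl
  have hG := ProbabilityTheory.stdGaussian_map f
  have hpi := ProbabilityTheory.map_pi_eq_stdGaussian (ι := Fin n)
  have hpi' : (stdGaussian n).map (WithLp.toLp 2) =
    ProbabilityTheory.stdGaussian (EuclideanSpace ℝ (Fin n)) := hpi
  have hback : (ProbabilityTheory.stdGaussian (EuclideanSpace ℝ (Fin n))).map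
      (WithLp.ofLp) = stdGaussian n := by
    rw [← hpi', Measure.map_map (by fun_prop) (by fun_prop)]
    exact Measure.map_id
  have hfun : (fun x => M.mulVec x) = WithLp.ofLp ∘ f ∘ (WithLp.toLp 2) := by
    funext x
    rfl
  rw [hfun, ← Measure.map_map (by fun_prop) (by fun_prop),
    ← Measure.map_map (by fun_prop) (by fun_prop), hpi', hG, hback]

/-- Entropy (data processing) lower bound. -/
lemma aux_entropy {Ω : Type*} [MeasurableSpace Ω] (P Q : Measure Ω) [IsProbabilityMeasure P]
    [IsProbabilityMeasure Q] (l : Ω → ℝ) (hl : Measurable l) (hli : Integrable l Q)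
    (hPQ : P = Q.withDensity (fun x => ENNReal.ofReal (Real.exp (- l x))))
    (A : Set Ω) (hA : MeasurableSet A) (q K : ℝ) (hq : 0 < q) (hqA : q ≤ Q.real A)
    (hK : ∫ x, l x ∂Q ≤ K) (hK0 : 0 ≤ K) :
    -((K + 2) / q) ≤ Real.log (P.real A) := by
  have hexp : Integrable (fun x => Real.exp (- l x)) Q := by
    refine ⟨(hl.neg.exp).aestronglyMeasurable, ?_⟩
    have h1 : P Set.univ = 1 := measure_univ
    rw [hPQ, withDensity_apply _ MeasurableSet.univ, Measure.restrict_univ] at h1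
    rw [hasFiniteIntegral_iff_ofReal (Filter.Eventually.of_forall fun x => (Real.exp_pos _).le), h1]
    exact ENNReal.one_lt_top
  have hPs : ∀ s, MeasurableSet s → P.real s = ∫ x in s, Real.exp (- l x) ∂Q := by
    intro s hs
    rw [integral_eq_lintegral_of_nonneg_ae
      (Filter.Eventually.of_forall fun x => (Real.exp_pos _).le)
      hexp.aestronglyMeasurable.restrict, measureReal_def, hPQ, withDensity_apply _ hs]
  set a : ℝ := (K + 2) / q with ha
  have ha0 : 0 ≤ a := by positivity
  -- on the complement
  have hc : Q.real Aᶜ - P.real Aᶜ ≤ ∫ x in Aᶜ, l x ∂Q := by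
    rw [hPs _ hA.compl]
    have : Q.real Aᶜ = ∫ x in Aᶜ, (1 : ℝ) ∂Q := by simp
    rw [this, ← integral_sub (integrable_const _) hexp.integrableOn]
    apply integral_mono ((integrable_const _).sub hexp.integrableOn) hli.integrableOn
    intro x
    have := Real.add_one_le_exp (- l x)
    simp only [Pi.sub_apply]
    linarith
  have hPc : P.real Aᶜ ≤ 1 := measureReal_le_one
  have hsplit := integral_add_compl hA hli
  have hQc : 0 ≤ Q.real Aᶜ := measureReal_nonneg
  have hAl : ∫ x in A, l x ∂Q ≤ K + 1 := by linarith
  -- tangent line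
  have hA1 : Real.exp (-a) * ((1 + a) * Q.real A - ∫ x in A, l x ∂Q) ≤ P.real A := by
    rw [hPs _ hA]
    have : (1 + a) * Q.real A = ∫ x in A, (1 + a : ℝ) ∂Q := by simp [mul_comm]
    rw [this, ← integral_sub (integrable_const _) hli.integrableOn, ← integral_const_mul]
    apply integral_mono (((integrable_const _).sub hli.integrableOn).const_mul _)
      hexp.integrableOn
    intro x
    have h := Real.add_one_le_exp (a - l x)
    have h2 : Real.exp (- l x) = Real.exp (-a) * Real.exp (a - l x) := by
      rw [← Real.exp_add]; ring_nf
    simp only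
    rw [h2]
    apply mul_le_mul_of_nonneg_left _ (Real.exp_pos _).le
    simp only [Pi.sub_apply]
    linarith
  have haq : K + 2 ≤ a * Q.real A := by
    calc K + 2 = a * q := by rw [ha]; field_simp
      _ ≤ _ := mul_le_mul_of_nonneg_left hqA ha0
  have hfin : Real.exp (-a) ≤ P.real A := by
    refine le_trans ?_ hA1
    have h1 : 1 ≤ (1 + a) * Q.real A - ∫ x in A, l x ∂Q := by nlinarith
    nlinarith [Real.exp_pos (-a)]
  calc -a = Real.log (Real.exp (-a)) := (Real.log_exp _).symm
    _ ≤ _ := Real.log_le_log (Real.exp_pos _) hfin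

/-- product of densities -/
lemma aux_pi_density {n : ℕ} (P Q : Fin n → Measure ℝ) [∀ i, IsProbabilityMeasure (P i)]
    [∀ i, IsProbabilityMeasure (Q i)] (l : Fin n → ℝ → ℝ) (hl : ∀ i, Measurable (l i))
    (h : ∀ i, P i = (Q i).withDensity (fun x => ENNReal.ofReal (Real.exp (- l i x)))) :
    Measure.pi P = (Measure.pi Q).withDensity
      (fun x => ENNReal.ofReal (Real.exp (- ∑ i, l i (x i)))) := by
  refine (Measure.pi_eq fun s hs => ?_)
  rw [withDensity_apply _ (MeasurableSet.univ_pi hs), ← lintegral_indicator (MeasurableSet.univ_pi hs)]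
  let g : Fin n → ℝ → ENNReal := fun i => (s i).indicator
    (fun x => ENNReal.ofReal (Real.exp (- l i x)))
  have hg : ∀ i, Measurable (g i) := fun i =>
    ((hl i).neg.exp.ennreal_ofReal).indicator (hs i)
  have hprod : ∀ x : Fin n → ℝ, (Set.univ.pi s).indicator
      (fun x => ENNReal.ofReal (Real.exp (- ∑ i, l i (x i)))) x = ∏ i, g i (x i) := by
    intro x
    by_cases hx : x ∈ Set.univ.pi s
    · rw [Set.indicator_of_mem hx, ← Finset.sum_neg_distrib, Real.exp_sum,
        ENNReal.ofReal_prod_of_nonneg (fun i _ => (Real.exp_pos _).le)]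
      refine Finset.prod_congr rfl fun i _ => ?_
      simp only [g]
      rw [Set.indicator_of_mem (hx i (Set.mem_univ _))]
    · rw [Set.indicator_of_notMem hx]
      simp only [Set.mem_pi, Set.mem_univ, true_imp_iff, not_forall] at hx
      obtain ⟨i, hi⟩ := hx
      symm
      apply Finset.prod_eq_zero (Finset.mem_univ i)
      simp only [g]
      rw [Set.indicator_of_notMem hi]
  simp_rw [hprod]
  have hind := ProbabilityTheory.iIndepFun_pi (μ := Q) (X := g) (fun i => (hg i).aemeasurable)
  rw [ProbabilityTheory.lintegral_prod_eq_prod_lintegral_of_indepFun _ _ hind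
    (fun i => (hg i).comp (measurable_pi_apply i))]
  refine Finset.prod_congr rfl fun i _ => ?_
  have := (measurePreserving_eval Q i).lintegral_comp (hg i)
  simp only [Function.eval] at this
  rw [this, h i, withDensity_apply _ (hs i), lintegral_indicator (hs i)]

/-- One-dimensional log density ratio. -/
noncomputable def auxEll (m v x : ℝ) : ℝ := -(1/2) * Real.log v - (x - m)^2 / (2 * v) + x^2 / 2

lemma aux_density1 (m : ℝ) (v : NNReal) (hv : v ≠ 0) :
    ProbabilityTheory.gaussianReal 0 1 = (ProbabilityTheory.gaussianReal m v).withDensity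
      (fun x => ENNReal.ofReal (Real.exp (- auxEll m v x))) := by
  rw [ProbabilityTheory.gaussianReal_of_var_ne_zero _ one_ne_zero,
    ProbabilityTheory.gaussianReal_of_var_ne_zero _ hv, ← withDensity_mul _
      (ProbabilityTheory.measurable_gaussianPDF _ _) (by unfold auxEll; fun_prop)]
  congr 1
  funext x
  simp only [Pi.mul_apply, ProbabilityTheory.gaussianPDF]
  rw [← ENNReal.ofReal_mul (ProbabilityTheory.gaussianPDFReal_nonneg _ _ _)]
  congr 1
  have hv' : (0:ℝ) < v := by positivity
  simp only [ProbabilityTheory.gaussianPDFReal, auxEll]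
  have h1 : Real.sqrt (v:ℝ) = Real.exp ((1/2) * Real.log v) := by
    rw [Real.sqrt_eq_rpow, Real.rpow_def_of_pos hv', mul_comm]
  simp only [NNReal.coe_one, mul_one, sub_zero]
  rw [Real.sqrt_mul (by positivity) (v : ℝ), mul_inv, h1, ← Real.exp_neg, mul_assoc, mul_assoc,
    ← Real.exp_add, ← Real.exp_add]
  congr 2
  ring

/-- Moments of a Gaussian. -/
lemma aux_moment (m : ℝ) (v : NNReal) (k : ℕ) :
    ∫ x, (x - m)^k ∂(ProbabilityTheory.gaussianReal m v) =
      (Real.sqrt v)^k * ∫ x, x^k ∂(ProbabilityTheory.gaussianReal 0 1) := by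
  have h1 : ProbabilityTheory.gaussianReal m v =
      (ProbabilityTheory.gaussianReal 0 1).map (fun x => Real.sqrt v * x + m) := by
    have e : (fun x : ℝ => Real.sqrt v * x + m) = (fun x => x + m) ∘ (fun x => Real.sqrt v * x) := rfl
    rw [e, ← Measure.map_map (by fun_prop) (by fun_prop),
      ProbabilityTheory.gaussianReal_map_const_mul, ProbabilityTheory.gaussianReal_map_add_const]
    congr 1
    · ring
    · ext
      simp
  rw [h1, integral_map (by fun_prop) (by fun_prop), ← integral_const_mul]
  congr 1
  funext x
  ring

lemma aux_integrable_pow (m : ℝ) (v : NNReal) (a b : ℝ) (k : ℕ) :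
    Integrable (fun x => (a + b * x)^k) (ProbabilityTheory.gaussianReal m v) := by
  have h : MemLp (fun x : ℝ => a + b * x) k (ProbabilityTheory.gaussianReal m v) := by
    have h0 := ProbabilityTheory.memLp_id_gaussianReal' (μ := m) (v := v) k (by simp)
    exact (memLp_const a).add (h0.const_mul b)
  have h2 := h.integrable_norm_pow'
  rw [← integrable_norm_iff (by fun_prop)]
  simpa [norm_pow] using h2

lemma aux_m1 (m : ℝ) (v : NNReal) :
    ∫ x, (x - m) ∂(ProbabilityTheory.gaussianReal m v) = 0 := by
  have := aux_moment m v 1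
  simpa [ProbabilityTheory.integral_id_gaussianReal] using this

lemma aux_m2 (m : ℝ) (v : NNReal) :
    ∫ x, (x - m)^2 ∂(ProbabilityTheory.gaussianReal m v) = v := by
  have h := ProbabilityTheory.variance_fun_id_gaussianReal (μ := m) (v := v)
  rw [ProbabilityTheory.variance_eq_integral (by fun_prop)] at h
  simpa [ProbabilityTheory.integral_id_gaussianReal] using h

lemma aux_quad_int (m : ℝ) (v : NNReal) (a b c : ℝ) :
    Integrable (fun x => a + b * (x - m) + c * (x-m)^2) (ProbabilityTheory.gaussianReal m v) ∧
    ∫ x, (a + b * (x - m) + c * (x-m)^2) ∂(ProbabilityTheory.gaussianReal m v) = a + c * v := by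
  have i1 : Integrable (fun x : ℝ => x - m) (ProbabilityTheory.gaussianReal m v) := by
    convert! aux_integrable_pow m v (-m) 1 1 using 2
    ring
  have i2 : Integrable (fun x : ℝ => (x - m)^2) (ProbabilityTheory.gaussianReal m v) := by
    convert! aux_integrable_pow m v (-m) 1 2 using 2
    ring
  have i3 : Integrable (fun x : ℝ => a + b * (x - m)) (ProbabilityTheory.gaussianReal m v) :=
    (integrable_const a).add (i1.const_mul b)
  refine ⟨i3.add (i2.const_mul c), ?_⟩
  rw [integral_add i3 (i2.const_mul c), integral_add (integrable_const a) (i1.const_mul b),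
    integral_const_mul, integral_const_mul, aux_m1, aux_m2]
  simp

lemma aux_ell_int (m : ℝ) (v : NNReal) (hv : v ≠ 0) :
    Integrable (auxEll m v) (ProbabilityTheory.gaussianReal m v) ∧
    ∫ x, auxEll m v x ∂(ProbabilityTheory.gaussianReal m v) =
      (1/2) * (- Real.log v - 1 + m^2 + v) := by
  have hv' : (v:ℝ) ≠ 0 := by exact_mod_cast hv
  have e : auxEll m v = fun x => (-(1/2) * Real.log v + m^2/2) + m * (x - m) +
      (1/2 - 1/(2*v)) * (x-m)^2 := by
    funext x
    unfold auxEll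
    ring
  rw [e]
  obtain ⟨h1, h2⟩ := aux_quad_int m v (-(1/2) * Real.log v + m^2/2) m (1/2 - 1/(2*v))
  refine ⟨h1, h2.trans ?_⟩
  field_simp
  ring

lemma aux_X_memLp (m : ℝ) (v : NNReal) (lam w t : ℝ) :
    MemLp (fun x => lam * (w - t * x)^2) 2 (ProbabilityTheory.gaussianReal m v) := by
  rw [memLp_two_iff_integrable_sq (by fun_prop)]
  convert! (aux_integrable_pow m v w (-t) 4).const_mul (lam^2) using 2
  ring

lemma aux_X_int (m : ℝ) (v : NNReal) (lam w t : ℝ) :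
    ∫ x, lam * (w - t * x)^2 ∂(ProbabilityTheory.gaussianReal m v) =
      lam * ((w - t * m)^2 + t^2 * v) := by
  have h := (aux_quad_int m v (lam * (w - t * m)^2) (-2 * lam * (w - t*m) * t) (lam * t^2)).2
  convert h using 2
  · funext x
    ring
  · ring

lemma aux_X_var (m : ℝ) (v : NNReal) (lam w t : ℝ) :
    ProbabilityTheory.variance (fun x => lam * (w - t * x)^2) (ProbabilityTheory.gaussianReal m v) ≤
      lam^2 * (8 * (w - t * m)^2 * t^2 * v + 2 * t^4 *
        (v^2 * ∫ x, x^4 ∂(ProbabilityTheory.gaussianReal 0 1))) := by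
  rw [← ProbabilityTheory.variance_add_const (by fun_prop) (-(lam * (w - t * m)^2))]
  refine (ProbabilityTheory.variance_le_expectation_sq (by fun_prop)).trans ?_
  have i2 : Integrable (fun x : ℝ => (x - m)^2) (ProbabilityTheory.gaussianReal m v) := by
    convert! aux_integrable_pow m v (-m) 1 2 using 2
    ring
  have i4 : Integrable (fun x : ℝ => (x - m)^4) (ProbabilityTheory.gaussianReal m v) := by
    convert! aux_integrable_pow m v (-m) 1 4 using 2
    ring
  have h4 := aux_moment m v 4
  have hs : (Real.sqrt v)^4 = (v:ℝ)^2 := by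
    rw [show 4 = 2 * 2 by norm_num, pow_mul, Real.sq_sqrt v.coe_nonneg]
  rw [hs] at h4
  have hR : ∫ x, (lam^2 * (8 * (w - t*m)^2 * t^2) * (x-m)^2 + lam^2 * (2 * t^4) * (x-m)^4)
      ∂(ProbabilityTheory.gaussianReal m v) = lam^2 * (8 * (w - t * m)^2 * t^2 * v + 2 * t^4 *
        (v^2 * ∫ x, x^4 ∂(ProbabilityTheory.gaussianReal 0 1))) := by
    rw [integral_add (i2.const_mul _) (i4.const_mul _), integral_const_mul, integral_const_mul,
      aux_m2, h4]
    ring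
  rw [← hR]
  apply integral_mono_of_nonneg
  · exact Filter.Eventually.of_forall fun x => sq_nonneg _
  · exact (i2.const_mul _).add (i4.const_mul _)
  · refine Filter.Eventually.of_forall fun x => ?_
    simp only [Pi.pow_apply]
    nlinarith [sq_nonneg (lam * (2 * (w - t*m) * t * (x-m) + t^2 * (x-m)^2))]

/-- Existence of `T`. -/
lemma aux_Trc {n : ℕ} (hn : 1 ≤ n) (lam : Fin n → ℝ) (R : ℝ) (hR : 0 < R)
    (h0 : ∀ i, 0 ≤ lam i) (hs : ∑ i, lam i = (n:ℝ)) :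
    0 < Trc lam R ∧ Rrc lam (Trc lam R) = R := by
  have hn0 : (0:ℝ) < n := by exact_mod_cast hn
  unfold Trc
  apply Classical.epsilon_spec (p := fun T => 0 < T ∧ Rrc lam T = R)
  obtain ⟨i, hi⟩ : ∃ i, 1 ≤ lam i := by
    by_contra! hcon
    have : ∑ i, lam i < ∑ i : Fin n, (1:ℝ) :=
      Finset.sum_lt_sum_of_nonempty ⟨⟨0, hn⟩, Finset.mem_univ _⟩ (fun i _ => hcon i)
    simp at this
    linarith
  set B : ℝ := 2 ^ (2 * n * R) with hB
  have hB0 : 0 < B := by positivity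
  have hcont : ContinuousOn (Rrc lam) (Set.Icc 0 B) := by
    unfold Rrc
    apply ContinuousOn.mul continuousOn_const
    apply continuousOn_finsetSum
    intro j _
    simp only [Real.logb]
    apply ContinuousOn.div_const
    apply ContinuousOn.log (by fun_prop)
    intro x hx
    have := mul_nonneg (h0 j) hx.1
    positivity
  have hB1 : R ≤ Rrc lam B := by
    unfold Rrc
    have h1 : Real.logb 2 (1 + lam i * B) ≤ ∑ i, Real.logb 2 (1 + lam i * B) := by
      apply Finset.single_le_sum (f := fun i => Real.logb 2 (1 + lam i * B)) _ (Finset.mem_univ i)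
      intro j _
      apply Real.logb_nonneg (by norm_num)
      have := mul_nonneg (h0 j) hB0.le
      linarith
    have h2 : 2 * n * R ≤ Real.logb 2 (1 + lam i * B) := by
      rw [Real.le_logb_iff_rpow_le (by norm_num) (by have := mul_nonneg (h0 i) hB0.le; linarith)]
      nlinarith
    calc R = 1 / (2 * (n:ℝ)) * (2 * n * R) := by field_simp
      _ ≤ _ := by gcongr; exact h2.trans h1
  have hz : Rrc lam 0 = 0 := by simp [Rrc]
  obtain ⟨T, hT, hTR⟩ := intermediate_value_Icc hB0.le hcont ⟨by rw [hz]; exact hR.le, hB1⟩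
  refine ⟨T, lt_of_le_of_ne hT.1 ?_, hTR⟩
  rintro rfl
  rw [hz] at hTR
  exact hR.ne hTR

lemma aux_S2_pos {n : ℕ} (hn : 1 ≤ n) (lam : Fin n → ℝ) (T : ℝ) (hT : 0 < T)
    (h0 : ∀ i, 0 ≤ lam i) (hs : ∑ i, lam i = (n:ℝ)) :
    0 < ∑ j, lam j / (1 + lam j * T) := by
  have hn0 : (0:ℝ) < n := by exact_mod_cast hn
  obtain ⟨i, hi⟩ : ∃ i, 0 < lam i := by
    by_contra! hcon
    have : ∑ i, lam i ≤ 0 := Finset.sum_nonpos (fun i _ => hcon i)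
    linarith
  have hp : ∀ j, 0 < 1 + lam j * T := fun j => by
    have := mul_nonneg (h0 j) hT.le
    linarith
  exact Finset.sum_pos' (fun j _ => div_nonneg (h0 j) (hp j).le)
    ⟨i, Finset.mem_univ _, div_pos hi (hp i)⟩

lemma aux_tau_sq {n : ℕ} (hn : 1 ≤ n) (lam w : Fin n → ℝ) (T : ℝ) (hT : 0 < T)
    (h0 : ∀ i, 0 ≤ lam i) (hs : ∑ i, lam i = (n:ℝ)) :
    (tauDef lam w T)^2 * ∑ j, lam j / (1 + lam j * T) =
      T * ∑ j, (w j) ^ 2 * (lam j) ^ 2 / (1 + lam j * T) ^ 2 := by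
  have h2 := aux_S2_pos hn lam T hT h0 hs
  have h1 : 0 ≤ T * ∑ j, (w j) ^ 2 * (lam j) ^ 2 / (1 + lam j * T) ^ 2 := by positivity
  unfold tauDef
  rw [div_pow, Real.sq_sqrt h1, Real.sq_sqrt h2.le]
  exact div_mul_cancel₀ _ h2.ne'

lemma aux_frac {x T : ℝ} (hx : 0 ≤ x) (hT : 0 < T) :
    T * x / (1 + x * T) ≤ 1 := by
  have := mul_nonneg hx hT.le
  rw [div_le_one (by linarith)]
  linarith

lemma aux_tau_le {n : ℕ} (hn : 1 ≤ n) (lam w : Fin n → ℝ) (T b : ℝ) (hT : 0 < T)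
    (h0 : ∀ i, 0 ≤ lam i) (hs : ∑ i, lam i = (n:ℝ)) (hw : ∀ i, (w i)^2 ≤ b) :
    (tauDef lam w T)^2 ≤ b := by
  have h2 := aux_S2_pos hn lam T hT h0 hs
  have h := aux_tau_sq hn lam w T hT h0 hs
  have hle : T * ∑ j, (w j) ^ 2 * (lam j) ^ 2 / (1 + lam j * T) ^ 2 ≤
      b * ∑ j, lam j / (1 + lam j * T) := by
    rw [Finset.mul_sum, Finset.mul_sum]
    refine Finset.sum_le_sum fun j _ => ?_
    have hp : 0 < 1 + lam j * T := by
      have := mul_nonneg (h0 j) hT.le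
      linarith
    have e : T * ((w j) ^ 2 * (lam j) ^ 2 / (1 + lam j * T) ^ 2) =
        ((w j)^2 * (T * lam j / (1 + lam j * T))) * (lam j / (1 + lam j * T)) := by
      field_simp
    rw [e]
    apply mul_le_mul_of_nonneg_right _ (div_nonneg (h0 j) hp.le)
    nlinarith [aux_frac (h0 j) hT, hw j, sq_nonneg (w j)]
  rw [← h] at hle
  exact le_of_mul_le_mul_right hle h2

lemma aux_main {n : ℕ} (hn : 1 ≤ n) (lam w : Fin n → ℝ) (R η T b q : ℝ) (hη : 0 < η)
    (hT : 0 < T) (hR : Rrc lam T = R)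
    (h0 : ∀ i, 0 ≤ lam i) (hs : ∑ i, lam i = (n:ℝ)) (hb : 0 ≤ b) (hw : ∀ i, (w i)^2 ≤ b)
    (htau : tauDef lam w T ≠ 0) (hq : 0 < q)
    (hqb : q ≤ 1 - (8 + 2 * ∫ x, x^4 ∂(ProbabilityTheory.gaussianReal 0 1)) * b^2 /
      (T * n * η^2)) :
    -((n * R * Real.log 2 + 2) / q) ≤ Real.log ((stdGaussian n).real
      {z | (1 / (n:ℝ)) * ∑ i, lam i * (w i - tauDef lam w T * z i)^2 ≤ DrcV lam w T + η}) := by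
  have hn0 : (0:ℝ) < n := by exact_mod_cast hn
  have hp : ∀ j, 0 < 1 + lam j * T := fun j => by
    have := mul_nonneg (h0 j) hT.le
    linarith
  have htS := aux_tau_sq hn lam w T hT h0 hs
  have htb := aux_tau_le hn lam w T b hT h0 hs hw
  set t := tauDef lam w T with ht
  set K4 : ℝ := ∫ x, x^4 ∂(ProbabilityTheory.gaussianReal 0 1) with hK4
  have hK40 : 0 ≤ K4 := integral_nonneg fun x => by positivity
  set m : Fin n → ℝ := fun i => T * lam i * w i / (t * (1 + lam i * T)) with hm
  set v : Fin n → NNReal := fun i => ⟨(1 + lam i * T)⁻¹, (inv_pos.mpr (hp i)).le⟩ with hv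
  have hvc : ∀ i, (v i : ℝ) = (1 + lam i * T)⁻¹ := fun i => rfl
  have hv0 : ∀ i, v i ≠ 0 := fun i => by
    intro h
    have := hvc i
    rw [h] at this
    exact (inv_pos.mpr (hp i)).ne this
  set Qi : Fin n → Measure ℝ := fun i => ProbabilityTheory.gaussianReal (m i) (v i) with hQi
  have hQp : ∀ i, IsProbabilityMeasure (Qi i) := fun i => by
    simp only [hQi]; infer_instance
  have hellm : ∀ i, Measurable (auxEll (m i) (v i)) := fun i => by
    unfold auxEll; fun_prop
  have hdens := aux_pi_density (fun _ : Fin n => ProbabilityTheory.gaussianReal 0 1) Qi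
    (fun i => auxEll (m i) (v i)) hellm (fun i => aux_density1 (m i) (v i) (hv0 i))
  -- the KL divergence
  have hint : ∀ i, Integrable (fun z : Fin n → ℝ => auxEll (m i) (v i) (z i)) (Measure.pi Qi) :=
    fun i => integrable_comp_eval (aux_ell_int (m i) (v i) (hv0 i)).1
  have hRlog : ∑ i, Real.log (1 + lam i * T) = 2 * n * R * Real.log 2 := by
    rw [← hR]
    unfold Rrc
    simp only [Real.logb]
    rw [← Finset.sum_div]
    have := Real.log_pos (by norm_num : (1:ℝ) < 2)
    generalize ∑ i, Real.log (1 + lam i * T) = S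
    field_simp
  have hKL : ∫ z, ∑ i, auxEll (m i) (v i) (z i) ∂(Measure.pi Qi) = n * R * Real.log 2 := by
    rw [integral_finsetSum _ (fun i _ => hint i)]
    have h1 : ∀ i, ∫ z, auxEll (m i) (v i) (z i) ∂(Measure.pi Qi) =
        (1/2) * Real.log (1 + lam i * T) + (1/2) * (T / t^2 * (T * ((w i)^2 * (lam i)^2 /
          (1 + lam i * T)^2))) - (1/2) * (T * (lam i / (1 + lam i * T))) := by
      intro i
      rw [integral_comp_eval (μ := Qi) (hellm i).aestronglyMeasurable]
      rw [(aux_ell_int (m i) (v i) (hv0 i)).2, hvc, Real.log_inv]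
      simp only [hm]
      have := (hp i).ne'
      field_simp
      ring
    rw [Finset.sum_congr rfl (fun i _ => h1 i), Finset.sum_sub_distrib, Finset.sum_add_distrib,
      ← Finset.mul_sum, ← Finset.mul_sum, ← Finset.mul_sum, ← Finset.mul_sum, ← Finset.mul_sum,
      ← Finset.mul_sum, hRlog, ← htS]
    field_simp
    ring
  -- the distortion
  have hmean : ∀ i, w i - t * m i = w i / (1 + lam i * T) := by
    intro i
    simp only [hm]
    have hpi := (hp i).ne'
    rw [eq_div_iff hpi, sub_mul, ← mul_div_assoc, mul_div_mul_left _ _ htau,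
      div_mul_cancel₀ _ hpi]
    ring
  let X : Fin n → ℝ → ℝ := fun i x => lam i * (w i - t * x)^2
  have hXm : ∀ i, MemLp (X i) 2 (Qi i) := fun i => aux_X_memLp (m i) (v i) (lam i) (w i) t
  have hXsum : MemLp (∑ i, fun z : Fin n → ℝ => X i (z i)) 2 (Measure.pi Qi) :=
    memLp_finsetSum' _ fun i _ => (hXm i).comp_measurePreserving (measurePreserving_eval Qi i)
  have hEX : ∫ z, (∑ i, fun z : Fin n → ℝ => X i (z i)) z ∂(Measure.pi Qi) =
      n * DrcV lam w T := by
    simp only [Finset.sum_apply]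
    rw [integral_finsetSum _ (fun i _ => integrable_comp_eval ((hXm i).integrable one_le_two))]
    have h1 : ∀ i, ∫ z, X i (z i) ∂(Measure.pi Qi) = (w i)^2 * lam i / (1 + lam i * T) -
        T * ((w i)^2 * (lam i)^2 / (1 + lam i * T)^2) + t^2 * (lam i / (1 + lam i * T)) := by
      intro i
      rw [integral_comp_eval (μ := Qi) (hXm i).aestronglyMeasurable]
      simp only [X]
      rw [aux_X_int, hmean, hvc]
      have := (hp i).ne'
      field_simp
      ring
    rw [Finset.sum_congr rfl (fun i _ => h1 i), Finset.sum_add_distrib, Finset.sum_sub_distrib,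
      ← Finset.mul_sum, ← Finset.mul_sum, htS]
    unfold DrcV
    rw [← mul_assoc, mul_one_div_cancel hn0.ne']
    ring
  have hVar : ProbabilityTheory.variance (∑ i, fun z : Fin n → ℝ => X i (z i)) (Measure.pi Qi) ≤
      (8 + 2 * K4) * b^2 * n / T := by
    rw [ProbabilityTheory.variance_sum_pi hXm]
    have h1 : ∀ i, ProbabilityTheory.variance (X i) (Qi i) ≤ (8 + 2 * K4) * b^2 / T * lam i := by
      intro i
      refine (aux_X_var (m i) (v i) (lam i) (w i) t).trans ?_
      rw [hmean, hvc, ← hK4]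
      set u := (1 + lam i * T)⁻¹ with hu
      have hu0 : 0 < u := inv_pos.mpr (hp i)
      have hu1 : u ≤ 1 := inv_le_one_of_one_le₀ (by have := mul_nonneg (h0 i) hT.le; linarith)
      have hlu : lam i * u ≤ 1 / T := by
        rw [le_div_iff₀ hT]
        have := aux_frac (h0 i) hT
        rw [div_eq_mul_inv, ← hu] at this
        linarith
      have hluu : lam i ^ 2 * u ≤ lam i / T := by
        have := mul_le_mul_of_nonneg_left hlu (h0 i)
        calc _ = lam i * (lam i * u) := by ring
          _ ≤ _ := this
          _ = _ := by ring
      have hA : (w i)^2 * t^2 ≤ b^2 := by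
        nlinarith [mul_le_mul (hw i) htb (sq_nonneg t) hb]
      have hB : t^4 ≤ b^2 := by
        nlinarith [mul_le_mul htb htb (sq_nonneg t) hb]
      have hl2 : 0 ≤ lam i ^ 2 * u := by positivity
      have hlT : 0 ≤ lam i / T := div_nonneg (h0 i) hT.le
      have hu2 : u^2 ≤ 1 := by nlinarith
      have e1 : lam i ^ 2 * (8 * (w i / (1 + lam i * T))^2 * t^2 * u + 2 * t^4 * (u^2 * K4)) =
          (lam i ^ 2 * u) * ((8 * ((w i)^2 * t^2)) * u^2 + (2 * K4 * t^4) * u) := by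
        rw [div_eq_mul_inv, ← hu]; ring
      rw [e1]
      have h8 : (8 * ((w i)^2 * t^2)) * u^2 ≤ 8 * b^2 := by
        calc _ ≤ (8 * ((w i)^2 * t^2)) * 1 := by gcongr
          _ ≤ _ := by linarith
      have h9 : (2 * K4 * t^4) * u ≤ 2 * K4 * b^2 := by
        calc _ ≤ (2 * K4 * t^4) * 1 := by gcongr
          _ ≤ 2 * K4 * b^2 := by rw [mul_one]; gcongr
      calc _ ≤ (lam i / T) * (8 * b^2 + 2 * K4 * b^2) := by
            apply mul_le_mul hluu (by linarith) (by positivity) hlT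
        _ = _ := by ring
    refine (Finset.sum_le_sum fun i _ => h1 i).trans ?_
    rw [← Finset.mul_sum, hs]
    apply le_of_eq
    ring
  -- Chebyshev
  set A : Set (Fin n → ℝ) := {z | (1 / (n:ℝ)) * ∑ i, lam i * (w i - t * z i)^2 ≤ DrcV lam w T + η}
    with hA
  have hAm : MeasurableSet A := measurableSet_le (by fun_prop) (by fun_prop)
  have hcheb := ProbabilityTheory.meas_ge_le_variance_div_sq hXsum (c := n * η) (by positivity)
  rw [hEX] at hcheb
  have hAc : (Measure.pi Qi).real Aᶜ ≤ (8 + 2 * K4) * b^2 / (T * n * η^2) := by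
    rw [measureReal_def]
    apply ENNReal.toReal_le_of_le_ofReal (by positivity)
    refine (measure_mono ?_).trans (hcheb.trans (ENNReal.ofReal_le_ofReal ?_))
    · intro z hz
      simp only [hA, Set.mem_compl_iff, Set.mem_ofPred_eq, not_le] at hz
      simp only [Set.mem_ofPred_eq, Finset.sum_apply, X]
      refine le_trans ?_ (le_abs_self _)
      have := mul_lt_mul_of_pos_left hz hn0
      rw [← mul_assoc, mul_one_div_cancel hn0.ne', one_mul] at this
      linarith
    · calc _ ≤ (8 + 2 * K4) * b^2 * n / T / (n * η)^2 := by gcongr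
        _ = _ := by field_simp
  have hqA : q ≤ (Measure.pi Qi).real A := by
    have := measureReal_compl (μ := Measure.pi Qi) hAm
    rw [probReal_univ] at this
    linarith
  have hKnn : 0 ≤ n * R * Real.log 2 := by
    have : 0 ≤ ∑ i, Real.log (1 + lam i * T) := Finset.sum_nonneg fun i _ =>
      Real.log_nonneg (by have := mul_nonneg (h0 i) hT.le; linarith)
    rw [hRlog] at this
    linarith
  have : IsProbabilityMeasure (stdGaussian n) := by unfold stdGaussian; infer_instance
  exact aux_entropy (stdGaussian n) (Measure.pi Qi) (fun z => ∑ i, auxEll (m i) (v i) (z i))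
    (Finset.measurable_sum _ fun i _ => (hellm i).comp (measurable_pi_apply i))
    (integrable_finsetSum _ fun i _ => hint i) hdens A hAm q _ hq hqA hKL.le hKnn

lemma aux_dSig {n : ℕ} (W c : Fin n → ℝ) (U : Matrix (Fin n) (Fin n) ℝ) (lam : Fin n → ℝ) (t : ℝ) :
    dSig (U * Matrix.diagonal lam * Uᵀ) W (t • c) =
      ∑ i, lam i * (Uᵀ.mulVec W i - t * Uᵀ.mulVec c i)^2 := by
  unfold dSig
  rw [← Matrix.mulVec_mulVec, ← Matrix.mulVec_mulVec, Matrix.dotProduct_mulVec,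
    ← Matrix.mulVec_transpose, Matrix.mulVec_sub, Matrix.mulVec_smul]
  simp only [dotProduct, Matrix.mulVec_diagonal, Pi.sub_apply, Pi.smul_apply, smul_eq_mul]
  exact Finset.sum_congr rfl fun i _ => by ring

lemma aux_prob {n : ℕ} (W : Fin n → ℝ) (U : Matrix (Fin n) (Fin n) ℝ) (lam : Fin n → ℝ) (t d : ℝ)
    (hU : U * Uᵀ = 1) :
    (stdGaussian n {cw | (1 / (n : ℝ)) * dSig (U * Matrix.diagonal lam * Uᵀ) W (t • cw) ≤ d}).toReal =
    (stdGaussian n).real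
      {z | (1 / (n:ℝ)) * ∑ i, lam i * (Uᵀ.mulVec W i - t * z i)^2 ≤ d} := by
  rw [measureReal_def]
  conv_rhs => rw [← aux_rot Uᵀ (by rw [Matrix.transpose_transpose, hU])]
  rw [Measure.map_apply (by fun_prop) (measurableSet_le (by fun_prop) (by fun_prop))]
  simp only [aux_dSig, Set.preimage_ofPred_eq]

lemma aux_T_lower {n : ℕ} (hn : 1 ≤ n) (lam : Fin n → ℝ) (R T : ℝ)
    (hT : 0 < T) (hR : Rrc lam T = R)
    (h0 : ∀ i, 0 ≤ lam i) (hs : ∑ i, lam i = (n:ℝ)) : 2 * R * Real.log 2 ≤ T := by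
  have hn0 : (0:ℝ) < n := by exact_mod_cast hn
  have hRlog : ∑ i, Real.log (1 + lam i * T) = 2 * n * R * Real.log 2 := by
    rw [← hR]
    unfold Rrc
    simp only [Real.logb]
    rw [← Finset.sum_div]
    have := Real.log_pos (by norm_num : (1:ℝ) < 2)
    generalize ∑ i, Real.log (1 + lam i * T) = S
    field_simp
  have : ∑ i, Real.log (1 + lam i * T) ≤ ∑ i, lam i * T := by
    refine Finset.sum_le_sum fun i _ => ?_
    have hp : 0 < 1 + lam i * T := by
      have := mul_nonneg (h0 i) hT.le
      linarith
    have := Real.log_le_sub_one_of_pos hp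
    linarith
  rw [hRlog, ← Finset.sum_mul, hs] at this
  refine le_of_mul_le_mul_left ?_ hn0
  linarith

/-- single-codeword success probability lower bound,
`ln p_n ≥ -n R* ln 2 (1 + c n^{4α-1})`. The sup norm `‖·‖` on `Fin n → ℝ` is `‖·‖∞`. -/
theorem stmt_7 (Rstar η α : ℝ) (hRstar : 0 < Rstar) (hη : 0 < η)
    (hα : 0 < α) (hα4 : α < 1 / 4) :
    ∃ c : ℝ, 0 < c ∧ ∃ n₀ : ℕ, ∀ n : ℕ, n₀ ≤ n →
      ∀ (W : Fin n → ℝ) (Sig U : Matrix (Fin n) (Fin n) ℝ) (lam : Fin n → ℝ),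
        U * Uᵀ = 1 → Sig = U * Matrix.diagonal lam * Uᵀ →
        (∀ i, 0 ≤ lam i) → (∑ i, lam i) = (n : ℝ) →
        ‖Uᵀ.mulVec W‖ ≤ (n : ℝ) ^ α →
        -((n : ℝ) * Rstar * Real.log 2) * (1 + c * (n : ℝ) ^ (4 * α - 1)) ≤
          Real.log
            ((stdGaussian n
              {cw | (1 / (n : ℝ)) *
                  dSig Sig W (tauDef lam (Uᵀ.mulVec W) (Trc lam Rstar) • cw)
                ≤ DDrcV lam (Uᵀ.mulVec W) Rstar + η}).toReal) := by
  have hlog2 : 0 < Real.log 2 := Real.log_pos (by norm_num)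
  set K4 : ℝ := ∫ x, x^4 ∂(ProbabilityTheory.gaussianReal 0 1) with hK4
  have hK40 : 0 ≤ K4 := integral_nonneg fun x => by positivity
  set C : ℝ := (8 + 2 * K4) / (2 * Rstar * Real.log 2 * η^2) with hC
  have hC0 : 0 < C := by positivity
  have hlim : Filter.Tendsto (fun n : ℕ => C * (n:ℝ) ^ (4 * α - 1)) Filter.atTop (nhds 0) := by
    have h1 := (tendsto_rpow_neg_atTop (y := 1 - 4 * α) (by linarith)).comp
      (tendsto_natCast_atTop_atTop (R := ℝ))
    have h2 := h1.const_mul C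
    rw [mul_zero] at h2
    refine h2.congr fun n => ?_
    simp only [Function.comp]
    congr 2
    ring
  obtain ⟨N, hN⟩ := Filter.eventually_atTop.mp
    (hlim.eventually (gt_mem_nhds (by norm_num : (0:ℝ) < 1/2)))
  refine ⟨2 * C + (2 + 4 * C) / (Rstar * Real.log 2), by positivity, max N 1, ?_⟩
  intro n hn W Sig U lam hU hSig h0 hs hnorm
  have hn1 : 1 ≤ n := le_trans (le_max_right _ _) hn
  have hnN := hN n (le_trans (le_max_left _ _) hn)
  have hn0 : (0:ℝ) < n := by exact_mod_cast hn1
  have hn1' : (1:ℝ) ≤ n := by exact_mod_cast hn1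
  subst hSig
  rw [aux_prob _ _ _ _ _ hU]
  obtain ⟨hT, hTR⟩ := aux_Trc hn1 lam Rstar hRstar h0 hs
  unfold DDrcV
  set T := Trc lam Rstar with hTdef
  set w := Uᵀ.mulVec W with hw
  set e : ℝ := (n:ℝ) ^ (4 * α - 1) with he
  have he0 : 0 < e := Real.rpow_pos_of_pos hn0 _
  have hp : ∀ j, 0 < 1 + lam j * T := fun j => by
    have := mul_nonneg (h0 j) hT.le
    linarith
  by_cases htau : tauDef lam w T = 0
  · have hS := aux_tau_sq hn1 lam w T hT h0 hs
    rw [htau] at hS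
    have hz : ∀ i, lam i * (w i)^2 = 0 := by
      have h1 : ∑ j, (w j) ^ 2 * (lam j) ^ 2 / (1 + lam j * T) ^ 2 = 0 := by
        have : T * ∑ j, (w j) ^ 2 * (lam j) ^ 2 / (1 + lam j * T) ^ 2 = 0 := by
          rw [← hS]; ring
        exact (mul_eq_zero.mp this).resolve_left hT.ne'
      rw [Finset.sum_eq_zero_iff_of_nonneg (fun i _ => by positivity)] at h1
      intro i
      have h2 := h1 i (Finset.mem_univ i)
      have h3 := (hp i).ne'
      have h4 : (w i) ^ 2 * (lam i) ^ 2 = 0 := by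
        rcases div_eq_zero_iff.mp h2 with h | h
        · exact h
        · exact absurd h (pow_ne_zero 2 h3)
      rcases mul_eq_zero.mp h4 with h | h
      · rw [h, mul_zero]
      · rw [pow_eq_zero_iff (by norm_num)] at h
        rw [h, zero_mul]
    have hD : 0 ≤ DrcV lam w T := by
      unfold DrcV
      exact mul_nonneg (by positivity) (Finset.sum_nonneg fun i _ =>
        div_nonneg (mul_nonneg (sq_nonneg _) (h0 i)) (hp i).le)
    have huniv : {z : Fin n → ℝ | (1 / (n:ℝ)) * ∑ i, lam i * (w i - tauDef lam w T * z i)^2 ≤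
        DrcV lam w T + η} = Set.univ := by
      ext z
      simp only [Set.mem_ofPred_eq, Set.mem_univ, iff_true, htau, zero_mul, sub_zero, hz,
        Finset.sum_const_zero, mul_zero]
      linarith
    have : IsProbabilityMeasure (stdGaussian n) := by unfold stdGaussian; infer_instance
    rw [huniv, probReal_univ, Real.log_one]
    have : 0 ≤ (n * Rstar * Real.log 2) *
        (1 + (2 * C + (2 + 4 * C) / (Rstar * Real.log 2)) * e) := by positivity
    linarith
  have hTl := aux_T_lower hn1 lam Rstar T hT hTR h0 hs
  set b : ℝ := (n:ℝ) ^ (2 * α) with hb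
  have hb0 : 0 < b := Real.rpow_pos_of_pos hn0 _
  have hwb : ∀ i, (w i)^2 ≤ b := by
    intro i
    have h1 : |w i| ≤ (n:ℝ)^α := (norm_le_pi_norm w i).trans hnorm
    have h2 : ((n:ℝ)^α)^2 = b := by
      rw [hb, ← Real.rpow_natCast, ← Real.rpow_mul hn0.le]
      congr 1
      push_cast
      ring
    rw [← h2, ← sq_abs]
    gcongr
  have hbe : b^2 = n * e := by
    rw [hb, he, ← Real.rpow_natCast, ← Real.rpow_mul hn0.le]
    nth_rewrite 2 [← Real.rpow_one (n:ℝ)]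
    rw [← Real.rpow_add hn0]
    congr 1
    push_cast
    ring
  have hne : 1 ≤ n * e := by
    rw [← hbe]
    have : 1 ≤ b := Real.one_le_rpow hn1' (by linarith)
    nlinarith
  have hqb : 1 - C * e ≤ 1 - (8 + 2 * K4) * b^2 / (T * n * η^2) := by
    have : (8 + 2 * K4) * b^2 / (T * n * η^2) ≤ C * e := by
      rw [hbe]
      calc (8 + 2 * K4) * (n * e) / (T * n * η^2) = (8 + 2 * K4) / (T * η^2) * e := by field_simp
        _ ≤ (8 + 2 * K4) / (2 * Rstar * Real.log 2 * η^2) * e := by gcongr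
        _ = _ := rfl
    linarith
  have hmain := aux_main hn1 lam w Rstar η T b (1 - C * e) hη hT hTR h0 hs hb0.le hwb htau
    (by linarith) hqb
  refine le_trans ?_ hmain
  have hinv : 1 / (1 - C * e) ≤ 1 + 2 * C * e := by
    rw [div_le_iff₀ (by linarith)]
    have : 0 < C * e := by positivity
    nlinarith
  set L := Rstar * Real.log 2 with hL
  have hL0 : 0 < L := by positivity
  have h1 : (n * Rstar * Real.log 2 + 2) / (1 - C * e) ≤
      (n * L + 2) * (1 + 2 * C * e) := by
    rw [div_eq_mul_one_div, mul_assoc (n:ℝ)]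
    apply mul_le_mul_of_nonneg_left hinv
    positivity
  have h2 : (n * L + 2) * (1 + 2 * C * e) ≤
      n * L * (1 + (2 * C + (2 + 4 * C) / L) * e) := by
    have e1 : n * L * (1 + (2 * C + (2 + 4 * C) / L) * e) =
        n * L + 2 * C * (n * L) * e + (2 + 4 * C) * (n * e) := by
      field_simp
      ring
    rw [e1]
    have : e ≤ n * e := by nlinarith
    nlinarith
  have e2 : (n * Rstar * Real.log 2 : ℝ) = n * L := by rw [hL]; ring
  rw [e2] at h1 ⊢
  linarith
end

section
/- Fix constants R*, ε, δ, α > 0 and let (W, Σ) be admissible with parameter α. Let c₁,…,c_M be i.i.d. N(0, Iₙ) with M = ⌊2^{n(R*+ε)}⌋, let τ = τ(W, Σ), and let q ∈ ℝ satisfy |q − τ| ≤ δ n^α. There is a universal constant C > 0 such that for every t > 1/n, with probability at least 1 − 2^{n(R*+ε)} exp(−C t) over the codewords, simultaneously for every i ∈ [M]: d_Σ(W, q cᵢ) ≤ ( √(d_Σ(W, τ cᵢ)) + δ n^α √(n(1+t)) )². -/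
open MeasureTheory Matrix Real

/-- Law of a codebook of `M` i.i.d. `N(0, I_n)` codewords. -/
noncomputable def codebookMeasure (n M : ℕ) : Measure (Fin M → (Fin n → ℝ)) :=
  Measure.pi fun _ => stdGaussian n

open ProbabilityTheory in
lemma gauss1 (θ : ℝ) (h : -1/2 < θ) :
    Integrable (fun x : ℝ => Real.exp (-θ * x ^ 2)) (gaussianReal 0 1) ∧
    ∫ x, Real.exp (-θ * x ^ 2) ∂(gaussianReal 0 1) = 1 / √(1 + 2 * θ) := by
  have hpdf : ∀ x : ℝ, gaussianPDFReal 0 1 x * Real.exp (-θ * x ^ 2)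
      = (√(2 * π))⁻¹ * Real.exp (-(1/2 + θ) * x ^ 2) := by
    intro x
    simp only [gaussianPDFReal, NNReal.coe_one, mul_one, sub_zero]
    rw [mul_assoc, ← Real.exp_add]
    congr 2
    ring
  have e1 : ∫ x, Real.exp (-θ * x ^ 2) ∂(gaussianReal 0 1) = 1 / √(1 + 2 * θ) := by
    rw [integral_gaussianReal_eq_integral_smul (by norm_num)]
    simp only [smul_eq_mul, hpdf]
    rw [integral_const_mul, integral_gaussian, ← Real.sqrt_inv, ← Real.sqrt_mul (by positivity),
      one_div (√(1 + 2 * θ)), ← Real.sqrt_inv]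
    congr 1
    have : (1/2 + θ) ≠ 0 := by linarith
    have : (1 + 2 * θ) ≠ 0 := by linarith
    have := Real.pi_ne_zero
    field_simp
  refine ⟨?_, e1⟩
  by_contra hc
  rw [integral_undef hc] at e1
  have : 0 < 1 / √(1 + 2 * θ) := by
    have : 0 < 1 + 2 * θ := by linarith
    positivity
  linarith

instance (n : ℕ) : IsProbabilityMeasure (stdGaussian n) := by
  unfold stdGaussian; infer_instance

instance (n M : ℕ) : IsProbabilityMeasure (codebookMeasure n M) := by
  unfold codebookMeasure; infer_instance

lemma gaussN {n : ℕ} (a : Fin n → ℝ) (h : ∀ i, -1/2 < a i) :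
    Integrable (fun x : Fin n → ℝ => Real.exp (-∑ i, a i * x i ^ 2)) (stdGaussian n) ∧
    ∫ x, Real.exp (-∑ i, a i * x i ^ 2) ∂(stdGaussian n) = ∏ i, 1 / √(1 + 2 * a i) := by
  have : (fun x : Fin n → ℝ => Real.exp (-∑ i, a i * x i ^ 2))
      = fun x => ∏ i, Real.exp (-(a i) * x i ^ 2) := by
    funext x
    rw [← Real.exp_sum, ← Finset.sum_neg_distrib]
    simp
  rw [this]
  constructor
  · exact Integrable.fintype_prod (fun i => (gauss1 (a i) (h i)).1)
  · unfold stdGaussian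
    rw [integral_fintype_prod_eq_prod (fun i x => Real.exp (-(a i) * x ^ 2))]
    exact Finset.prod_congr rfl fun i _ => (gauss1 (a i) (h i)).2

lemma inv_sqrt_eq (x : ℝ) (h : 0 < x) : 1 / √x = Real.exp (-(1/2) * Real.log x) := by
  rw [Real.sqrt_eq_rpow, Real.rpow_def_of_pos h, one_div, ← Real.exp_neg]
  congr 1; ring

/-- upper tail -/
lemma upper_tail {n : ℕ} (p : Fin n → ℝ) (h0 : ∀ i, 0 ≤ p i) (h1 : ∑ i, p i = 1) (t : ℝ) :
    (stdGaussian n).real {x | 1 + t < ∑ i, p i * x i ^ 2} ≤ Real.exp ((1 - t) / 4) := by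
  have hp1 : ∀ i, p i ≤ 1 := fun i => h1 ▸ Finset.single_le_sum (fun j _ => h0 j) (Finset.mem_univ i)
  obtain ⟨hi, he⟩ := gaussN (fun i => -(p i / 4)) (fun i => by linarith [hp1 i])
  have hle : ∏ i, 1 / √(1 + 2 * -(p i / 4)) ≤ Real.exp (1/2) := by
    calc _ ≤ ∏ i, Real.exp (p i / 2) := by
          refine Finset.prod_le_prod (fun i _ => by positivity) fun i _ => ?_
          have hpos : 0 < 1 + 2 * -(p i / 4) := by linarith [hp1 i]
          rw [inv_sqrt_eq _ hpos]
          apply Real.exp_le_exp.2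
          have := Real.one_sub_inv_le_log_of_pos hpos
          have h2 : (1 + 2 * -(p i / 4))⁻¹ ≤ 1 + p i := by
            rw [inv_le_iff_one_le_mul₀ hpos]
            nlinarith [hp1 i, h0 i]
          linarith
      _ = _ := by rw [← Real.exp_sum, ← Finset.sum_div, h1]
  have hm := mul_meas_ge_le_integral_of_nonneg (μ := stdGaussian n)
    (Filter.Eventually.of_forall fun x => (Real.exp_pos _).le) hi (Real.exp ((1 + t) / 4))
  rw [he] at hm
  have hsub : {x : Fin n → ℝ | 1 + t < ∑ i, p i * x i ^ 2} ⊆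
      {x | Real.exp ((1 + t) / 4) ≤ Real.exp (-∑ i, -(p i / 4) * x i ^ 2)} := by
    intro x hx
    simp only [Set.mem_ofPred_eq] at hx ⊢
    apply Real.exp_le_exp.2
    have : -∑ i, -(p i / 4) * x i ^ 2 = (∑ i, p i * x i ^ 2) / 4 := by
      rw [Finset.sum_div, ← Finset.sum_neg_distrib]
      exact Finset.sum_congr rfl fun i _ => by ring
    rw [this]; linarith
  have h3 := measureReal_mono (μ := stdGaussian n) hsub
  have h4 : Real.exp ((1 - t) / 4) = Real.exp (1/2) / Real.exp ((1 + t) / 4) := by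
    rw [← Real.exp_sub]; congr 1; ring
  rw [h4, le_div_iff₀ (Real.exp_pos _)]
  have := mul_le_mul_of_nonneg_right h3 (Real.exp_pos ((1 + t) / 4)).le
  simp only [Measure.real] at *
  linarith

lemma log_up (x : ℝ) (h : 0 ≤ x) : x - x ^ 2 / 2 ≤ Real.log (1 + x) := by
  refine le_trans ?_ (Real.le_log_one_add_of_nonneg h)
  rw [le_div_iff₀ (by linarith)]
  nlinarith [pow_nonneg h 3]

lemma log_low (x : ℝ) (h : 0 ≤ x) (h1 : x ≤ 1) : Real.log (1 + x) ≤ x - x ^ 2 / 4 := by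
  rw [Real.log_le_iff_le_exp (by linarith)]
  have hy : 0 ≤ x - x ^ 2 / 4 := by nlinarith
  refine le_trans ?_ (Real.quadratic_le_exp_of_nonneg hy)
  have h2 : 1 / 2 ≤ (1 - x / 4) ^ 2 := by nlinarith
  nlinarith [mul_nonneg (sq_nonneg x) (sub_nonneg.2 h2)]

/-- anti-concentration -/
lemma anti {n : ℕ} (a : Fin n → ℝ) (h0 : ∀ i, 0 ≤ a i) (h1 : ∑ i, a i ^ 2 = 1) :
    (stdGaussian n).real {x | ∑ i, a i < ∑ i, a i * x i ^ 2} ≤ 191 / 192 := by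
  have ha1 : ∀ i, a i ≤ 1 := fun i => by
    have : a i ^ 2 ≤ 1 := h1 ▸ Finset.single_le_sum (f := fun j => a j ^ 2) (fun j _ => sq_nonneg _) (Finset.mem_univ i)
    nlinarith [h0 i]
  set A := ∑ i, a i with hA
  set X : (Fin n → ℝ) → ℝ := fun x => ∑ i, a i * x i ^ 2 with hX
  obtain ⟨hi1, he1⟩ := gaussN (fun i => a i / 2) (fun i => by linarith [h0 i])
  obtain ⟨hi2, he2⟩ := gaussN (fun i => a i) (fun i => by linarith [h0 i])
  have hX1 : ∀ x : Fin n → ℝ, ∑ i, a i / 2 * x i ^ 2 = X x / 2 := fun x => by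
    rw [hX, Finset.sum_div]; exact Finset.sum_congr rfl fun i _ => by ring
  simp only [hX1] at hi1 he1
  have lo : Real.exp (1/8) * Real.exp (-A/2) ≤ ∏ i, 1 / √(1 + 2 * (a i / 2)) := by
    have : Real.exp (1/8) * Real.exp (-A/2) = ∏ i, Real.exp (a i ^ 2 / 8 - a i / 2) := by
      rw [← Real.exp_sum, ← Real.exp_add, Finset.sum_sub_distrib, ← Finset.sum_div, ← Finset.sum_div, h1]
      congr 1; rw [hA]; ring
    rw [this]
    refine Finset.prod_le_prod (fun i _ => by positivity) fun i _ => ?_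
    rw [inv_sqrt_eq _ (by linarith [h0 i])]
    apply Real.exp_le_exp.2
    have := log_low (a i) (h0 i) (ha1 i)
    rw [show 1 + 2 * (a i / 2) = 1 + a i by ring]
    linarith
  have up : ∏ i, 1 / √(1 + 2 * a i) ≤ Real.exp 1 * Real.exp (-A) := by
    have : Real.exp 1 * Real.exp (-A) = ∏ i, Real.exp (a i ^ 2 - a i) := by
      rw [← Real.exp_sum, ← Real.exp_add, Finset.sum_sub_distrib, h1]
      congr 1
    rw [this]
    refine Finset.prod_le_prod (fun i _ => by positivity) fun i _ => ?_
    rw [inv_sqrt_eq _ (by linarith [h0 i])]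
    apply Real.exp_le_exp.2
    have := log_up (2 * a i) (by linarith [h0 i])
    nlinarith
  rw [← he1] at lo
  rw [← he2] at up
  set S := {x : Fin n → ℝ | A < X x} with hS
  have hSm : MeasurableSet S := measurableSet_lt measurable_const (by fun_prop)
  -- pointwise
  have pw : ∀ x, Real.exp (A/2) * Real.exp (-(X x / 2)) ≤
      1 + (1/48) * (Real.exp A * Real.exp (-X x)) + 12 * Sᶜ.indicator (fun _ => (1:ℝ)) x := by
    intro x
    have hsq : Real.exp A * Real.exp (-X x) = (Real.exp (A/2) * Real.exp (-(X x / 2))) ^ 2 := by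
      rw [← Real.exp_add, ← Real.exp_add, ← Real.exp_nat_mul]; congr 1; push_cast; ring
    rw [hsq]
    by_cases hx : x ∈ S
    · have : Real.exp (A/2) * Real.exp (-(X x / 2)) ≤ 1 := by
        rw [← Real.exp_add]; apply Real.exp_le_one_iff.2
        have : A < X x := hx
        linarith
      simp [hx]; nlinarith [sq_nonneg (Real.exp (A/2) * Real.exp (-(X x / 2)))]
    · simp [hx]
      nlinarith [sq_nonneg (Real.exp (A/2) * Real.exp (-(X x / 2)) - 24)]
  have hii : Integrable (Sᶜ.indicator (fun _ => (1:ℝ))) (stdGaussian n) :=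
    (integrable_const (1:ℝ)).indicator hSm.compl
  have i0 : Integrable (fun x => (1/48 : ℝ) * (Real.exp A * Real.exp (-X x))) (stdGaussian n) :=
    (hi2.const_mul (Real.exp A)).const_mul (1/48)
  have i1 : Integrable (fun x => 1 + (1/48 : ℝ) * (Real.exp A * Real.exp (-X x))) (stdGaussian n) :=
    (integrable_const (1:ℝ)).add i0
  have hint := integral_mono (hi1.const_mul _) (i1.add (hii.const_mul 12)) pw
  simp only [Pi.add_apply] at hint
  rw [integral_add i1 (hii.const_mul 12),
    integral_add (integrable_const (1:ℝ)) i0,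
    integral_const_mul, integral_const_mul, integral_const_mul, integral_const_mul,
    integral_indicator_const _ hSm.compl, probReal_compl_eq_one_sub hSm] at hint
  simp at hint
  have e8 : (1/8 : ℝ) + 1 ≤ Real.exp (1/8) := Real.add_one_le_exp _
  have b1 : Real.exp (1/8) ≤ Real.exp (A/2) * ∫ x, Real.exp (-(X x / 2)) ∂stdGaussian n := by
    have := mul_le_mul_of_nonneg_left lo (Real.exp_pos (A/2)).le
    rwa [mul_left_comm, ← Real.exp_add, show A/2 + -A/2 = 0 by ring, Real.exp_zero, mul_one] at this
  have b2 : Real.exp A * ∫ x, Real.exp (-(X x)) ∂stdGaussian n ≤ Real.exp 1 := by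
    have := mul_le_mul_of_nonneg_left up (Real.exp_pos A).le
    rwa [mul_left_comm, ← Real.exp_add, show A + -A = 0 by ring, Real.exp_zero, mul_one] at this
  have e3 := Real.exp_one_lt_d9
  linarith

lemma rot {n : ℕ} (U : Matrix (Fin n) (Fin n) ℝ) (hU : U * Uᵀ = 1) :
    MeasurePreserving (fun x => Uᵀ.mulVec x) (stdGaussian n) (stdGaussian n) := by
  have hm : Measurable (fun x : Fin n → ℝ => Uᵀ.mulVec x) :=
    (Continuous.matrix_mulVec continuous_const continuous_id).measurable
  refine ⟨hm, ?_⟩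
  let f : EuclideanSpace ℝ (Fin n) →ₗᵢ[ℝ] EuclideanSpace ℝ (Fin n) :=
    { toLinearMap := Matrix.toEuclideanLin Uᵀ
      norm_map' := by
        intro x
        rw [← sq_eq_sq₀ (norm_nonneg _) (norm_nonneg _), EuclideanSpace.real_norm_sq_eq,
          EuclideanSpace.real_norm_sq_eq]
        have h1 : ∀ v : Fin n → ℝ, ∑ i, v i ^ 2 = v ⬝ᵥ v := fun v => by
          simp [dotProduct, sq]
        have h2 := h1 (Uᵀ.mulVec (WithLp.ofLp x))
        have h3 := h1 (WithLp.ofLp x)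
        have h4 : Uᵀ.mulVec (WithLp.ofLp x) ⬝ᵥ Uᵀ.mulVec (WithLp.ofLp x)
            = WithLp.ofLp x ⬝ᵥ WithLp.ofLp x := by
          rw [Matrix.dotProduct_mulVec, Matrix.vecMul_transpose, Matrix.mulVec_mulVec, hU,
            Matrix.one_mulVec]
        exact h2.trans (h4.trans h3.symm) }
  let e := f.toLinearIsometryEquiv rfl
  have h1 := ProbabilityTheory.stdGaussian_map e
  rw [← ProbabilityTheory.map_pi_eq_stdGaussian] at h1
  have h2 := congrArg (Measure.map (WithLp.ofLp : EuclideanSpace ℝ (Fin n) → (Fin n → ℝ))) h1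
  have m1 : Measurable (WithLp.ofLp : EuclideanSpace ℝ (Fin n) → (Fin n → ℝ)) := by fun_prop
  have m2 : Measurable (WithLp.toLp 2 : (Fin n → ℝ) → EuclideanSpace ℝ (Fin n)) := by fun_prop
  have m3 : Measurable e := e.continuous.measurable
  rw [Measure.map_map m3 m2, Measure.map_map m1 (m3.comp m2), Measure.map_map m1 m2] at h2
  have h3 : (WithLp.ofLp : EuclideanSpace ℝ (Fin n) → (Fin n → ℝ)) ∘ (WithLp.toLp 2) = id := rfl
  rw [h3, Measure.map_id] at h2
  exact h2

lemma single {n : ℕ} (hn : 0 < n) (U : Matrix (Fin n) (Fin n) ℝ) (lam : Fin n → ℝ)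
    (hU : U * Uᵀ = 1) (h0 : ∀ i, 0 ≤ lam i) (h1 : ∑ i, lam i = (n : ℝ)) (t : ℝ) (ht : 0 < t) :
    (stdGaussian n).real {x | (n : ℝ) * (1 + t) < ∑ i, lam i * (Uᵀ.mulVec x) i ^ 2}
      ≤ Real.exp (-(1/400) * t) := by
  have hn' : (0 : ℝ) < n := by exact_mod_cast hn
  have hm : MeasurableSet {x : Fin n → ℝ | (n : ℝ) * (1 + t) < ∑ i, lam i * x i ^ 2} :=
    measurableSet_lt measurable_const (by fun_prop)
  have hpre := (rot U hU).measureReal_preimage hm.nullMeasurableSet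
  have : {x | (n : ℝ) * (1 + t) < ∑ i, lam i * (Uᵀ.mulVec x) i ^ 2} =
    (fun x => Uᵀ.mulVec x) ⁻¹' {x : Fin n → ℝ | (n : ℝ) * (1 + t) < ∑ i, lam i * x i ^ 2} := rfl
  rw [this, hpre]
  by_cases h2 : 2 ≤ t
  · have hs : {x : Fin n → ℝ | (n : ℝ) * (1 + t) < ∑ i, lam i * x i ^ 2} =
        {x | 1 + t < ∑ i, lam i / n * x i ^ 2} := by
      ext x
      have : ∑ i, lam i / n * x i ^ 2 = (∑ i, lam i * x i ^ 2) / n := by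
        rw [Finset.sum_div]; exact Finset.sum_congr rfl fun i _ => by ring
      simp only [Set.mem_ofPred_eq]
      rw [this, lt_div_iff₀ hn', mul_comm]
    rw [hs]
    refine (upper_tail (fun i => lam i / n) (fun i => div_nonneg (h0 i) hn'.le) ?_ t).trans ?_
    · rw [← Finset.sum_div, h1, div_self hn'.ne']
    · apply Real.exp_le_exp.2; linarith
  · push Not at h2
    set V := √(∑ i, lam i ^ 2) with hV
    have hVs : 0 < ∑ i, lam i ^ 2 := by
      apply lt_of_le_of_ne (Finset.sum_nonneg fun i _ => sq_nonneg _)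
      intro h
      have h' := (Finset.sum_eq_zero_iff_of_nonneg (fun i _ => sq_nonneg (lam i))).1 h.symm
      have : ∑ i, lam i = 0 := Finset.sum_eq_zero fun i hi => by simpa using h' i hi
      linarith
    have hVp : 0 < V := Real.sqrt_pos.2 hVs
    have ha := anti (fun i => lam i / V) (fun i => div_nonneg (h0 i) hVp.le) (by
      simp only [div_pow]
      rw [← Finset.sum_div, hV, Real.sq_sqrt hVs.le, div_self hVs.ne'])
    have hsub : {x : Fin n → ℝ | (n : ℝ) * (1 + t) < ∑ i, lam i * x i ^ 2} ⊆
        {x | ∑ i, lam i / V < ∑ i, lam i / V * x i ^ 2} := by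
      intro x hx
      have : ∑ i, lam i / V * x i ^ 2 = (∑ i, lam i * x i ^ 2) / V := by
        rw [Finset.sum_div]; exact Finset.sum_congr rfl fun i _ => by ring
      simp only [Set.mem_ofPred_eq] at hx ⊢
      rw [this, ← Finset.sum_div, h1]
      apply div_lt_div_of_pos_right _ hVp
      nlinarith
    refine ((measureReal_mono hsub).trans ha).trans ?_
    have := Real.add_one_le_exp (-(1/400) * t)
    linarith

lemma dSig_eq {n : ℕ} (U : Matrix (Fin n) (Fin n) ℝ) (lam : Fin n → ℝ) (h0 : ∀ i, 0 ≤ lam i)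
    (w v : Fin n → ℝ) :
    dSig (U * Matrix.diagonal lam * Uᵀ) w v =
      ‖(WithLp.toLp 2 fun i => √(lam i) * (Uᵀ.mulVec (w - v)) i : EuclideanSpace ℝ (Fin n))‖ ^ 2 := by
  rw [EuclideanSpace.real_norm_sq_eq]
  unfold dSig
  rw [← Matrix.mulVec_mulVec, ← Matrix.mulVec_mulVec, Matrix.dotProduct_mulVec,
    ← Matrix.mulVec_transpose]
  simp only [dotProduct, Matrix.mulVec_diagonal]
  refine Finset.sum_congr rfl fun i _ => ?_
  rw [mul_pow, Real.sq_sqrt (h0 i)]; ring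

lemma det_part {n : ℕ} (U : Matrix (Fin n) (Fin n) ℝ) (lam : Fin n → ℝ) (h0 : ∀ i, 0 ≤ lam i)
    (w c : Fin n → ℝ) (q τ D B : ℝ) (hq : |q - τ| ≤ D)
    (hc : ∑ i, lam i * (Uᵀ.mulVec c) i ^ 2 ≤ B) :
    dSig (U * Matrix.diagonal lam * Uᵀ) w (q • c) ≤
      (√(dSig (U * Matrix.diagonal lam * Uᵀ) w (τ • c)) + D * √B) ^ 2 := by
  rw [dSig_eq U lam h0, dSig_eq U lam h0, Real.sqrt_sq (norm_nonneg _)]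
  set F : (Fin n → ℝ) → EuclideanSpace ℝ (Fin n) :=
    fun v => WithLp.toLp 2 fun i => √(lam i) * (Uᵀ.mulVec v) i with hF
  have hsplit : F (w - q • c) = F (w - τ • c) - (q - τ) • F c := by
    ext i
    simp [hF, Matrix.mulVec_sub, Matrix.mulVec_smul]
    ring
  have hFc : ‖F c‖ ≤ √B := by
    apply Real.le_sqrt_of_sq_le
    rw [EuclideanSpace.real_norm_sq_eq]
    refine le_trans (le_of_eq (Finset.sum_congr rfl fun i _ => ?_)) hc
    simp only [hF]
    rw [mul_pow, Real.sq_sqrt (h0 i)]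
  change ‖F (w - q • c)‖ ^ 2 ≤ (‖F (w - τ • c)‖ + D * √B) ^ 2
  apply pow_le_pow_left₀ (norm_nonneg _)
  rw [hsplit]
  refine (norm_sub_le _ _).trans ?_
  rw [norm_smul, Real.norm_eq_abs]
  gcongr
  exact (abs_nonneg _).trans hq

/-- distortion incurred by quantizing `τ` to `q` with `|q - τ| ≤ δ n^α`.
The sup norm `‖·‖` on `Fin n → ℝ` is `‖·‖∞`. -/
theorem stmt_9 :
    ∃ C : ℝ, 0 < C ∧
      ∀ (n : ℕ) (Rstar ε δ α : ℝ), 0 < Rstar → 0 < ε → 0 < δ → 0 < α →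
      ∀ (W : Fin n → ℝ) (Sig U : Matrix (Fin n) (Fin n) ℝ) (lam : Fin n → ℝ),
        U * Uᵀ = 1 → Sig = U * Matrix.diagonal lam * Uᵀ →
        (∀ i, 0 ≤ lam i) → (∑ i, lam i) = (n : ℝ) →
        ‖Uᵀ.mulVec W‖ ≤ (n : ℝ) ^ α →
      ∀ q : ℝ, |q - tauDef lam (Uᵀ.mulVec W) (Trc lam Rstar)| ≤ δ * (n : ℝ) ^ α →
      ∀ t : ℝ, 1 / (n : ℝ) < t →
        1 - (2 : ℝ) ^ ((n : ℝ) * (Rstar + ε)) * Real.exp (-C * t) ≤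
          (codebookMeasure n ⌊(2 : ℝ) ^ ((n : ℝ) * (Rstar + ε))⌋₊
            {c | ∀ i, dSig Sig W (q • c i) ≤
                (Real.sqrt (dSig Sig W (tauDef lam (Uᵀ.mulVec W) (Trc lam Rstar) • c i))
                  + δ * (n : ℝ) ^ α * Real.sqrt ((n : ℝ) * (1 + t))) ^ 2}).toReal := by
  refine ⟨1/400, by norm_num, ?_⟩
  intro n Rstar ε δ α hR hε hδ hα W Sig U lam hU hSig h0 h1 hW q hq t ht
  subst hSig
  set τ := tauDef lam (Uᵀ.mulVec W) (Trc lam Rstar) with hτ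
  set P := (2 : ℝ) ^ ((n : ℝ) * (Rstar + ε)) with hP
  have hPpos : 0 < P := by positivity
  set M := ⌊P⌋₊ with hM
  set G := {c : Fin M → (Fin n → ℝ) | ∀ i,
    dSig (U * Matrix.diagonal lam * Uᵀ) W (q • c i) ≤
      (Real.sqrt (dSig (U * Matrix.diagonal lam * Uᵀ) W (τ • c i))
        + δ * (n : ℝ) ^ α * Real.sqrt ((n : ℝ) * (1 + t))) ^ 2} with hG
  have key : ∀ c : Fin M → (Fin n → ℝ),
      (∀ i, ∑ j, lam j * (Uᵀ.mulVec (c i)) j ^ 2 ≤ (n : ℝ) * (1 + t)) → c ∈ G :=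
    fun c hc i => det_part U lam h0 W (c i) q τ _ _ hq (hc i)
  change 1 - P * Real.exp (-(1/400) * t) ≤ (codebookMeasure n M).real G
  rcases Nat.eq_zero_or_pos n with hn | hn
  · subst hn
    have : G = Set.univ := Set.eq_univ_of_forall fun c => key c fun i => by simp
    rw [this, probReal_univ]
    have := mul_pos hPpos (Real.exp_pos (-(1/400) * t))
    linarith
  have ht0 : 0 < t := lt_of_le_of_lt (by positivity) ht
  let B : Fin M → Set (Fin M → (Fin n → ℝ)) := fun i =>
    (Function.eval i) ⁻¹' {x | (n : ℝ) * (1 + t) < ∑ j, lam j * (Uᵀ.mulVec x) j ^ 2}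
  have hmeas : MeasurableSet {x | (n : ℝ) * (1 + t) < ∑ j, lam j * (Uᵀ.mulVec x) j ^ 2} := by
    have hm := (rot U hU).measurable
    exact measurableSet_lt measurable_const
      (Finset.measurable_sum _ fun j _ => (((measurable_pi_apply j).comp hm).pow_const 2).const_mul _)
  have hB : ∀ i, (codebookMeasure n M).real (B i) ≤ Real.exp (-(1/400) * t) := fun i => by
    have hmp : MeasurePreserving (Function.eval i) (codebookMeasure n M) (stdGaussian n) :=
      measurePreserving_eval (fun _ : Fin M => stdGaussian n) i
    rw [hmp.measureReal_preimage hmeas.nullMeasurableSet]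
    exact single hn U lam hU h0 h1 t ht0
  have hBm : MeasurableSet (⋃ i, B i) :=
    MeasurableSet.iUnion fun i => (measurable_pi_apply i) hmeas
  have hsub : (⋃ i, B i)ᶜ ⊆ G := by
    intro c hc
    apply key c
    intro i
    by_contra hlt
    exact hc (Set.mem_iUnion.2 ⟨i, not_le.1 hlt⟩)
  have hun : (codebookMeasure n M).real (⋃ i, B i) ≤ P * Real.exp (-(1/400) * t) := by
    refine (measureReal_iUnion_fintype_le _).trans ?_
    refine (Finset.sum_le_sum fun i _ => hB i).trans ?_
    rw [Finset.sum_const, Finset.card_univ, Fintype.card_fin, nsmul_eq_mul]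
    exact mul_le_mul_of_nonneg_right (Nat.floor_le hPpos.le) (Real.exp_pos _).le
  have h3 := measureReal_mono (μ := codebookMeasure n M) hsub
  rw [probReal_compl_eq_one_sub hBm] at h3
  linarith
end
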